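/- Let m and Q be real numbers with 0 < Q^2 < m^2, set r₊ = m + √(m² − Q²), r₋ = m − √(m² − Q²), let f₂ : (0, mπ) → (r₋, r₊) be the inverse of F(r) = 2m·arccos((r₊ − r)/(r₊ − r₋)) − √((r₊ − r)(r − r₋)), and let f₁(μ) = √(−1 + 2m/f₂(μ) − Q²/f₂(μ)²). Then f₁(μ) > 0 for all μ ∈ (0, mπ), f₂ is strictly increasing on (0, mπ), and f₂ maps (0, mπ) onto (r₋, r₊). -/

import Mathlib

/-- The derivative of the proper-time function between horizons `a < b` is positive. -/
lemma properTime_deriv_pos {a b r : ℝ} (ha : 0 < a) (hr : r ∈ Set.Ioo a b) :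
    0 < deriv (fun r => (a + b) * Real.arccos ((b - r) / (b - a))
      - Real.sqrt ((b - r) * (r - a))) r := by
  obtain ⟨har, hrb⟩ := hr
  have hd : 0 < b - a := by linarith
  have hS : 0 < (b - r) * (r - a) := mul_pos (by linarith) (by linarith)
  have hu0 : 0 < (b - r) / (b - a) := div_pos (by linarith) hd
  have hu1 : (b - r) / (b - a) < 1 := (div_lt_one hd).2 (by linarith)
  have hW : 0 < 1 - ((b - r) / (b - a)) ^ 2 := by nlinarith
  have hlin : HasDerivAt (fun r : ℝ => (b - r) / (b - a)) (-1 / (b - a)) r :=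
    ((hasDerivAt_id r).const_sub b).div_const (b - a)
  have hacos := (Real.hasDerivAt_arccos (by linarith) hu1.ne).comp r hlin
  have hprod : HasDerivAt (fun r : ℝ => (b - r) * (r - a)) (a + b - 2 * r) r := by
    have h := ((hasDerivAt_id r).const_sub b).mul ((hasDerivAt_id r).sub_const a)
    refine h.congr_deriv ?_
    simp only [id]
    ring
  refine lt_of_lt_of_eq ?_ ((hacos.const_mul (a + b)).sub (hprod.sqrt hS.ne')).deriv.symm
  set W := Real.sqrt (1 - ((b - r) / (b - a)) ^ 2)
  set S := Real.sqrt ((b - r) * (r - a))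
  have hWpos : 0 < W := Real.sqrt_pos.2 hW
  have hSpos : 0 < S := Real.sqrt_pos.2 hS
  have hS2 : S ^ 2 = (b - r) * (r - a) := Real.sq_sqrt hS.le
  have hW2 : ((b - a) * W) ^ 2 = (r - a) * ((b - a) + (b - r)) := by
    rw [mul_pow, Real.sq_sqrt hW.le]
    field_simp
    ring
  have key : (a + b - 2 * r) * ((b - a) * W) < (a + b) * (2 * S) := by
    rcases le_or_gt (a + b - 2 * r) 0 with hc | hc
    · have h1 : 0 < (a + b) * (2 * S) := by
        have : 0 < a + b := by linarith
        positivity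
      exact (mul_nonpos_of_nonpos_of_nonneg hc (by positivity)).trans_lt h1
    · refine lt_of_pow_lt_pow_left₀ 2 (mul_nonneg (by linarith) (by positivity)) ?_
      have hsq : (a + b - 2 * r) ^ 2 ≤ (a + b) ^ 2 :=
        pow_le_pow_left₀ hc.le (by linarith) 2
      have hbound : (b - a) + (b - r) < 4 * (b - r) := by linarith
      calc ((a + b - 2 * r) * ((b - a) * W)) ^ 2
          = (a + b - 2 * r) ^ 2 * ((r - a) * ((b - a) + (b - r))) := by rw [mul_pow, hW2]
        _ ≤ (a + b) ^ 2 * ((r - a) * ((b - a) + (b - r))) :=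
            mul_le_mul_of_nonneg_right hsq (mul_nonneg (by linarith) (by linarith))
        _ < (a + b) ^ 2 * ((r - a) * (4 * (b - r))) :=
            mul_lt_mul_of_pos_left (mul_lt_mul_of_pos_left hbound (by linarith))
              (pow_pos (by linarith) 2)
        _ = ((a + b) * (2 * S)) ^ 2 := by rw [mul_pow, mul_pow, hS2]; ring
  have heq : (a + b) * (-(1 / W) * (-1 / (b - a))) - (a + b - 2 * r) / (2 * S)
      = (a + b) / ((b - a) * W) - (a + b - 2 * r) / (2 * S) := by
    field_simp
  rw [heq, sub_pos, div_lt_div_iff₀ (by positivity) (by positivity)]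
  exact key

/-- The proper-time function is strictly increasing between the horizons `a < b`. -/
lemma properTime_strictMonoOn {a b : ℝ} (ha : 0 < a) :
    StrictMonoOn (fun r => (a + b) * Real.arccos ((b - r) / (b - a))
      - Real.sqrt ((b - r) * (r - a))) (Set.Icc a b) := by
  refine strictMonoOn_of_deriv_pos (convex_Icc a b) ?_ fun r hr => ?_
  · have := Real.continuous_arccos
    exact Continuous.continuousOn (by fun_prop)
  · rw [interior_Icc] at hr
    exact properTime_deriv_pos ha hr


/-- In the multiply warped product representation of the interior of a
nonextremal Reissner–Nordström black hole (mass `m > 0`, charge `Q`, `0 < Q² < m²`),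
where `f₂ : (0, mπ) → (r₋, r₊)` is the inverse of
`F(r) = 2m·arccos((r₊ − r)/(r₊ − r₋)) − √((r₊ − r)(r − r₋))` and
`f₁(μ) = √(−1 + 2m/f₂(μ) − Q²/f₂(μ)²)`, one has `f₁ > 0` on `(0, mπ)`, `f₂` is
strictly increasing on `(0, mπ)`, and `f₂` maps `(0, mπ)` onto `(r₋, r₊)`. -/
theorem reissner_nordstrom_f1_pos_f2_mono (m Q : ℝ) (hm : 0 < m)
    (hQ : 0 < Q ^ 2) (hQm : Q ^ 2 < m ^ 2)
    (rp rm : ℝ)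
    (hrp : rp = m + Real.sqrt (m ^ 2 - Q ^ 2))
    (hrm : rm = m - Real.sqrt (m ^ 2 - Q ^ 2))
    (F f₁ f₂ : ℝ → ℝ)
    (hF : ∀ r, F r = 2 * m * Real.arccos ((rp - r) / (rp - rm))
        - Real.sqrt ((rp - r) * (r - rm)))
    (hf₂mem : ∀ μ ∈ Set.Ioo 0 (m * Real.pi), f₂ μ ∈ Set.Ioo rm rp)
    (hf₂inv : ∀ μ ∈ Set.Ioo 0 (m * Real.pi), F (f₂ μ) = μ)
    (hf₁ : ∀ μ, f₁ μ = Real.sqrt (-1 + 2 * m / f₂ μ - Q ^ 2 / (f₂ μ) ^ 2)) :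
    (∀ μ ∈ Set.Ioo 0 (m * Real.pi), 0 < f₁ μ) ∧
    StrictMonoOn f₂ (Set.Ioo 0 (m * Real.pi)) ∧
    f₂ '' Set.Ioo 0 (m * Real.pi) = Set.Ioo rm rp := by
  have hs : 0 < Real.sqrt (m ^ 2 - Q ^ 2) := Real.sqrt_pos.2 (by linarith)
  have hs2 : Real.sqrt (m ^ 2 - Q ^ 2) ^ 2 = m ^ 2 - Q ^ 2 := Real.sq_sqrt (by linarith)
  have hsum : 2 * m = rm + rp := by rw [hrp, hrm]; ring
  have hprod : Q ^ 2 = rm * rp := by rw [hrp, hrm]; linarith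
  have hlt : rm < rp := by linarith
  have hrm0 : 0 < rm := pos_of_mul_pos_left (hprod ▸ hQ) (by linarith)
  have hmono : StrictMonoOn F (Set.Icc rm rp) := by
    have hFeq : F = fun r => (rm + rp) * Real.arccos ((rp - r) / (rp - rm))
        - Real.sqrt ((rp - r) * (r - rm)) := by
      funext r
      rw [hF, hsum]
    exact hFeq ▸ properTime_strictMonoOn hrm0
  have hFrm : F rm = 0 := by
    rw [hF, div_self (sub_pos.2 hlt).ne']
    simp
  have hFrp : F rp = m * Real.pi := by
    rw [hF]
    simp only [sub_self, zero_div, Real.arccos_zero, zero_mul, Real.sqrt_zero]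
    ring
  have hIcc : Set.Ioo rm rp ⊆ Set.Icc rm rp := Set.Ioo_subset_Icc_self
  refine ⟨fun μ hμ => ?_, fun μ hμ ν hν hμν => ?_, ?_⟩
  · obtain ⟨h1, h2⟩ := hf₂mem μ hμ
    have h0 : 0 < f₂ μ := hrm0.trans h1
    have hN : -1 + 2 * m / f₂ μ - Q ^ 2 / f₂ μ ^ 2
        = (rp - f₂ μ) * (f₂ μ - rm) / f₂ μ ^ 2 := by
      rw [hsum, hprod]
      field_simp
      ring
    rw [hf₁, hN]
    exact Real.sqrt_pos.2
      (div_pos (mul_pos (sub_pos.2 h2) (sub_pos.2 h1)) (pow_pos h0 2))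
  · rw [← hmono.lt_iff_lt (hIcc (hf₂mem μ hμ)) (hIcc (hf₂mem ν hν)), hf₂inv μ hμ, hf₂inv ν hν]
    exact hμν
  · refine Set.Subset.antisymm (Set.image_subset_iff.2 hf₂mem) fun r hr => ?_
    have hFr : F r ∈ Set.Ioo 0 (m * Real.pi) :=
      ⟨hFrm ▸ hmono (Set.left_mem_Icc.2 hlt.le) (hIcc hr) hr.1,
        hFrp ▸ hmono (hIcc hr) (Set.right_mem_Icc.2 hlt.le) hr.2⟩
    exact ⟨F r, hFr, hmono.injOn (hIcc (hf₂mem _ hFr)) (hIcc hr) (hf₂inv _ hFr)⟩
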